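/- Let N ≥ 1, 0 < s < 1, and let q satisfy 1 < q < 1*_s = N/(N−s). Then S_{s,q}(ℝ^N) ≤ (s/N) · (1/q − 1/1*_s)^{(N/s)(1/1*_s − 1/q)} · (1 − 1/q)^{(N/s)(1/q − 1)} · 𝒮_{s,1*}^{(N/s)(1 − 1/q)}. -/

import Mathlib

open MeasureTheory Real
open scoped ENNReal

noncomputable section

/-- Euclidean space `ℝ^N`. -/
abbrev Rn (N : ℕ) := EuclideanSpace ℝ (Fin N)

/-- The Gagliardo `W^{s,1}` seminorm `[u]_{s,1}`, as an extended nonnegative real. -/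
def gagE (N : ℕ) (s : ℝ) (u : Rn N → ℝ) : ℝ≥0∞ :=
  ∫⁻ x, ∫⁻ y, ENNReal.ofReal (|u x - u y| / dist x y ^ ((N : ℝ) + s))

/-- Membership in `W^{s,1}(ℝ^N)`: integrable with finite Gagliardo seminorm. -/
def memW (N : ℕ) (s : ℝ) (u : Rn N → ℝ) : Prop :=
  Integrable u volume ∧ gagE N s u < ⊤

/-- Real-valued Gagliardo seminorm. -/
def gag (N : ℕ) (s : ℝ) (u : Rn N → ℝ) : ℝ := (gagE N s u).toReal

/-- The `L^q(ℝ^N)` norm. -/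
def Lq (N : ℕ) (q : ℝ) (u : Rn N → ℝ) : ℝ := (∫ x, |u x| ^ q) ^ (1 / q)

/-- `u` is nonzero as an element of a Lebesgue-type space. -/
def nontriv (N : ℕ) (u : Rn N → ℝ) : Prop := ¬ u =ᵐ[(volume : Measure (Rn N))] 0

/-- The best constant `S_{s,q}(Ω)` of the embedding `W^{s,1}_0(Ω) ↪ L^q(Ω)`. -/
def SDom (N : ℕ) (s q : ℝ) (Ω : Set (Rn N)) : ℝ :=
  sInf { r : ℝ | ∃ u : Rn N → ℝ, memW N s u ∧
      (∀ᵐ x ∂(volume : Measure (Rn N)), x ∉ Ω → u x = 0) ∧ nontriv N u ∧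
      r = gag N s u / Lq N q u }

/-- The critical constant `𝒮_{s,1*}`. -/
def Scrit (N : ℕ) (s : ℝ) : ℝ :=
  sInf { r : ℝ | ∃ u : Rn N → ℝ, memW N s u ∧ nontriv N u ∧
      r = gag N s u / Lq N ((N : ℝ) / ((N : ℝ) - s)) u }

/-- The best constant `S_{s,q}(ℝ^N)` of the embedding `W^{s,1}(ℝ^N) ↪ L^q(ℝ^N)`. -/
def SFull (N : ℕ) (s q : ℝ) : ℝ :=
  sInf { r : ℝ | ∃ u : Rn N → ℝ, memW N s u ∧ nontriv N u ∧
      r = (gag N s u + ∫ x, |u x|) / Lq N q u }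

open scoped NNReal

/-!
Superlevel sets turn the critical Sobolev quotient into an isoperimetric one. By the coarea formula
`[u]_{s,1} = ∫ P_s({u > t}) dt`, and since `‖u‖_p ≤ ∫₀^∞ |{|u| > t}|^{1/p} dt` (the embedding
`L^{p,1} ⊆ L^p`), any `c` with `c |E|^{1/1*} ≤ P_s(E)` for all sets `E` is at most `𝒮_{s,1*}`. Hence
for every `l > 𝒮_{s,1*}` some set satisfies `P_s(E) ≤ l |E|^{1/1*}`, and by dilation it may be given
any volume `m`. Its indicator shows `S_{s,q} ≤ l m^{1/1* - 1/q} + m^{1 - 1/q}`; minimising in `m`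
and letting `l → 𝒮_{s,1*}` gives the bound, without using that the critical constant is attained.
-/

section LorentzEmbedding

variable {α : Type*} [MeasurableSpace α] {μ : Measure α} {f : α → ℝ≥0} {g : α → ℝ≥0∞} {p q : ℝ}

/-- The Lorentz norm `‖f‖_{L^{p,1}}`, normalised as `∫₀^∞ μ(f > t)^{1/p} dt` so that `p = 1` gives
the `L¹` norm. -/
def lorentzOneNorm (μ : Measure α) (p : ℝ) (f : α → ℝ≥0) : ℝ≥0∞ :=
  ∫⁻ t in Set.Ioi (0 : ℝ), μ {x | t < f x} ^ (1 / p)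

lemma lorentzOneNorm_mono {f₁ f₂ : α → ℝ≥0} (hp : 0 ≤ p) (h : ∀ x, f₁ x ≤ f₂ x) :
    lorentzOneNorm μ p f₁ ≤ lorentzOneNorm μ p f₂ :=
  lintegral_mono fun _ ↦ ENNReal.rpow_le_rpow
    (measure_mono fun x hx ↦ hx.trans_le (NNReal.coe_le_coe.2 (h x))) (by positivity)

lemma lorentzOneNorm_one (hf : AEMeasurable f μ) : lorentzOneNorm μ 1 f = ∫⁻ x, f x ∂μ := by
  simpa [lorentzOneNorm] using (lintegral_eq_lintegral_meas_lt μ (f := fun x ↦ (f x : ℝ))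
    (.of_forall fun x ↦ (f x).coe_nonneg) hf.coe_nnreal_real).symm

lemma setLIntegral_le_measure_rpow_mul {E : Set α} (hpq : p.HolderConjugate q)
    (hg : AEMeasurable g μ) :
    ∫⁻ x in E, g x ∂μ ≤ μ E ^ (1 / p) * (∫⁻ x, g x ^ q ∂μ) ^ (1 / q) := by
  calc ∫⁻ x in E, g x ∂μ
      ≤ (∫⁻ _ in E, 1 ^ p ∂μ) ^ (1 / p) * (∫⁻ x in E, g x ^ q ∂μ) ^ (1 / q) := by
        simpa using ENNReal.lintegral_mul_le_Lp_mul_Lq (μ.restrict E) hpq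
          (f := fun _ ↦ 1) aemeasurable_const hg.restrict
    _ ≤ μ E ^ (1 / p) * (∫⁻ x, g x ^ q ∂μ) ^ (1 / q) := by
        have := hpq.symm.nonneg
        simp only [ENNReal.one_rpow, setLIntegral_one]
        gcongr
        exact Measure.restrict_le_self

/-- Layer cake for `f` with respect to the measure `g μ`, then Hölder on each superlevel set. -/
lemma lintegral_mul_le_lorentzOneNorm_mul (hpq : p.HolderConjugate q)
    (hf : AEMeasurable f μ) (hg : AEMeasurable g μ) :
    ∫⁻ x, g x * f x ∂μ ≤ lorentzOneNorm μ p f * (∫⁻ x, g x ^ q ∂μ) ^ (1 / q) := by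
  have hf_lt (t : ℝ) : NullMeasurableSet {x | t < f x} μ :=
    nullMeasurableSet_lt aemeasurable_const hf.coe_nnreal_real
  have hμ_anti : Antitone fun t : ℝ ↦ μ {x | t < f x} :=
    fun _ _ hst ↦ measure_mono fun _ hx ↦ hst.trans_lt hx
  calc ∫⁻ x, g x * f x ∂μ
      = lorentzOneNorm (μ.withDensity g) 1 f := by
        rw [lorentzOneNorm_one (hf.mono_ac (withDensity_absolutelyContinuous μ g)),
          lintegral_withDensity_eq_lintegral_mul₀ hg hf.coe_nnreal_ennreal]
        rfl
    _ = ∫⁻ t in Set.Ioi (0 : ℝ), ∫⁻ x in {x | t < f x}, g x ∂μ := by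
        simp_rw [lorentzOneNorm, withDensity_apply₀ g (hf_lt _), div_one, ENNReal.rpow_one]
    _ ≤ ∫⁻ t in Set.Ioi (0 : ℝ), μ {x | t < f x} ^ (1 / p) * (∫⁻ x, g x ^ q ∂μ) ^ (1 / q) :=
        lintegral_mono fun _ ↦ setLIntegral_le_measure_rpow_mul hpq hg
    _ = lorentzOneNorm μ p f * (∫⁻ x, g x ^ q ∂μ) ^ (1 / q) :=
        lintegral_mul_const'' _ (hμ_anti.measurable.pow_const _).aemeasurable

lemma lintegral_rpow_le_lorentzOneNorm_rpow_of_ne_top (hpq : p.HolderConjugate q)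
    (hf : AEMeasurable f μ) (hfp : ∫⁻ x, (f x : ℝ≥0∞) ^ p ∂μ ≠ ∞) :
    ∫⁻ x, (f x : ℝ≥0∞) ^ p ∂μ ≤ lorentzOneNorm μ p f ^ p := by
  set I := ∫⁻ x, (f x : ℝ≥0∞) ^ p ∂μ with hI
  rcases eq_or_ne I 0 with hI0 | hI0
  · simp [hI0]
  have hfp_mul (x : α) : (f x : ℝ≥0∞) ^ p = (f x : ℝ≥0∞) ^ (p - 1) * f x := by
    simpa using ENNReal.rpow_add_of_nonneg (x := f x) (p - 1) 1 hpq.sub_one_pos.le zero_le_one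
  have hfp_conj (x : α) : ((f x : ℝ≥0∞) ^ (p - 1)) ^ q = (f x : ℝ≥0∞) ^ p := by
    rw [← ENNReal.rpow_mul, hpq.sub_one_mul_conj]
  have hHolder : I ^ (1 / p) * I ^ (1 / q) ≤ lorentzOneNorm μ p f * I ^ (1 / q) := by
    calc I ^ (1 / p) * I ^ (1 / q) = ∫⁻ x, (f x : ℝ≥0∞) ^ (p - 1) * f x ∂μ := by
          rw [← ENNReal.rpow_add _ _ hI0 hfp, one_div, one_div, hpq.inv_add_inv_eq_one,
            ENNReal.rpow_one, hI]
          exact lintegral_congr hfp_mul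
      _ ≤ lorentzOneNorm μ p f * I ^ (1 / q) := by
          simpa only [hfp_conj] using
            lintegral_mul_le_lorentzOneNorm_mul hpq hf (hf.coe_nnreal_ennreal.pow_const (p - 1))
  have hnorm : I ^ (1 / p) ≤ lorentzOneNorm μ p f :=
    (ENNReal.mul_le_mul_iff_left (ENNReal.rpow_pos (pos_iff_ne_zero.2 hI0) hfp).ne'
      (ENNReal.rpow_ne_top_of_nonneg hpq.symm.one_div_nonneg hfp)).1 hHolder
  rwa [one_div, ENNReal.rpow_inv_le_iff hpq.pos] at hnorm

lemma lintegral_rpow_le_lorentzOneNorm_rpow [SigmaFinite μ] (hp : 1 ≤ p) (hf : AEMeasurable f μ) :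
    ∫⁻ x, (f x : ℝ≥0∞) ^ p ∂μ ≤ lorentzOneNorm μ p f ^ p := by
  rcases hp.eq_or_lt with rfl | hp
  · simp [lorentzOneNorm_one hf]
  have hp0 : 0 < p := one_pos.trans hp
  simp_rw [← ENNReal.coe_rpow_of_nonneg _ hp0.le]
  refine le_of_forall_lt fun L hL ↦ ?_
  obtain ⟨g, hgf, hg_top, hLg⟩ := exists_lt_lintegral_simpleFunc_of_lt_lintegral hL
  set h : α → ℝ≥0 := fun x ↦ g x ^ p⁻¹
  have hh_pow (x : α) : (h x : ℝ≥0∞) ^ p = g x := by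
    simp only [h, ← ENNReal.coe_rpow_of_nonneg _ hp0.le, NNReal.rpow_inv_rpow hp0.ne']
  have hhf (x : α) : h x ≤ f x := (NNReal.rpow_inv_le_iff hp0).2 (hgf x)
  calc L < ∫⁻ x, (h x : ℝ≥0∞) ^ p ∂μ := by simpa only [hh_pow] using hLg
    _ ≤ lorentzOneNorm μ p h ^ p :=
        lintegral_rpow_le_lorentzOneNorm_rpow_of_ne_top (.conjExponent hp)
          (g.measurable.pow_const _).aemeasurable (by simpa only [hh_pow] using hg_top.ne)
    _ ≤ lorentzOneNorm μ p f ^ p :=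
        ENNReal.rpow_le_rpow (lorentzOneNorm_mono hp0.le hhf) hp0.le

end LorentzEmbedding

section FractionalPerimeter

variable {N : ℕ} {s : ℝ} {u : Rn N → ℝ} {E : Set (Rn N)}

/-- The fractional `s`-perimeter `P_s(E) = [1_E]_{s,1}`; this is twice the usual
`∫_E ∫_{Eᶜ} |x - y|^{-N-s}`, since `gagE` integrates over ordered pairs. -/
def fracPerimeter (N : ℕ) (s : ℝ) (E : Set (Rn N)) : ℝ≥0∞ :=
  gagE N s (E.indicator fun _ ↦ 1)

lemma gagE_abs_le (N : ℕ) (s : ℝ) (u : Rn N → ℝ) : gagE N s (fun x ↦ |u x|) ≤ gagE N s u :=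
  lintegral_mono fun x ↦ lintegral_mono fun y ↦ ENNReal.ofReal_le_ofReal <|
    div_le_div_of_nonneg_right (abs_abs_sub_abs_le_abs_sub _ _) (by positivity)

lemma lintegral_abs_indicator_superlevel_sub {α : Type*} (u : α → ℝ) (x y : α) :
    ∫⁻ t : ℝ, ENNReal.ofReal |{z | t < u z}.indicator (fun _ ↦ (1 : ℝ)) x -
      {z | t < u z}.indicator (fun _ ↦ (1 : ℝ)) y| = ENNReal.ofReal |u x - u y| := by
  have hIco (t : ℝ) : ENNReal.ofReal |{z | t < u z}.indicator (fun _ ↦ (1 : ℝ)) x -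
      {z | t < u z}.indicator (fun _ ↦ (1 : ℝ)) y| =
        (Set.Ico (min (u x) (u y)) (max (u x) (u y))).indicator 1 t := by
    by_cases hx : t < u x <;> by_cases hy : t < u y <;>
      simp [Set.indicator, hx, hy]
  simp_rw [hIco]
  rw [lintegral_indicator_one measurableSet_Ico, Real.volume_Ico, max_sub_min_eq_abs']

lemma gagE_eq_lintegral_prod (s : ℝ) (hu : AEMeasurable u) :
    gagE N s u =
      ∫⁻ z : Rn N × Rn N, ENNReal.ofReal (|u z.1 - u z.2| / dist z.1 z.2 ^ ((N : ℝ) + s)) := by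
  have hdist : Measurable fun z : Rn N × Rn N ↦ dist z.1 z.2 ^ ((N : ℝ) + s) := by fun_prop
  exact lintegral_lintegral
    ((hu.comp_fst.sub hu.comp_snd).abs.div hdist.aemeasurable).ennreal_ofReal

lemma fracPerimeter_eq_lintegral_prod (s : ℝ) (hE : NullMeasurableSet E) :
    fracPerimeter N s E = ∫⁻ z : Rn N × Rn N, ENNReal.ofReal
      (|E.indicator (fun _ ↦ (1 : ℝ)) z.1 - E.indicator (fun _ ↦ (1 : ℝ)) z.2| /
        dist z.1 z.2 ^ ((N : ℝ) + s)) :=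
  gagE_eq_lintegral_prod s (aemeasurable_const.indicator₀ hE)

lemma aemeasurable_superlevel_kernel (s : ℝ) (hu : AEMeasurable u) :
    AEMeasurable fun p : (Rn N × Rn N) × ℝ ↦ ENNReal.ofReal
      (|{w | p.2 < u w}.indicator (fun _ ↦ (1 : ℝ)) p.1.1 -
        {w | p.2 < u w}.indicator (fun _ ↦ (1 : ℝ)) p.1.2| /
          dist p.1.1 p.1.2 ^ ((N : ℝ) + s)) := by
  have hfst : AEMeasurable fun p : (Rn N × Rn N) × ℝ ↦
      {w | p.2 < u w}.indicator (fun _ ↦ (1 : ℝ)) p.1.1 :=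
    aemeasurable_const.indicator₀
      (nullMeasurableSet_lt measurable_snd.aemeasurable hu.comp_fst.comp_fst)
  have hsnd : AEMeasurable fun p : (Rn N × Rn N) × ℝ ↦
      {w | p.2 < u w}.indicator (fun _ ↦ (1 : ℝ)) p.1.2 :=
    aemeasurable_const.indicator₀
      (nullMeasurableSet_lt measurable_snd.aemeasurable hu.comp_snd.comp_fst)
  have hdist : Measurable fun p : (Rn N × Rn N) × ℝ ↦ dist p.1.1 p.1.2 ^ ((N : ℝ) + s) := by
    fun_prop
  exact ((hfst.sub hsnd).abs.div hdist.aemeasurable).ennreal_ofReal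

theorem gagE_eq_lintegral_fracPerimeter (s : ℝ) (hu : AEMeasurable u) :
    gagE N s u = ∫⁻ t : ℝ, fracPerimeter N s {x | t < u x} := by
  have hlevel (t : ℝ) : NullMeasurableSet {x | t < u x} :=
    nullMeasurableSet_lt aemeasurable_const hu
  simp_rw [gagE_eq_lintegral_prod s hu, fracPerimeter_eq_lintegral_prod s (hlevel _)]
  rw [← lintegral_lintegral_swap (aemeasurable_superlevel_kernel s hu)]
  refine lintegral_congr fun z ↦ ?_
  simp_rw [div_eq_mul_inv, ENNReal.ofReal_mul (abs_nonneg _)]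
  rw [lintegral_mul_const' _ _ ENNReal.ofReal_ne_top, lintegral_abs_indicator_superlevel_sub]

end FractionalPerimeter

section Isoperimetric

variable {N : ℕ} {s p c : ℝ} {u : Rn N → ℝ}

lemma Lq_nonneg (N : ℕ) (q : ℝ) (u : Rn N → ℝ) : 0 ≤ Lq N q u := by
  unfold Lq
  positivity

lemma Lq_eq_toReal (hp : 0 ≤ p) (hu : AEMeasurable u) :
    Lq N p u = ((∫⁻ x, (‖u x‖₊ : ℝ≥0∞) ^ p) ^ (1 / p)).toReal := by
  rw [Lq, integral_eq_lintegral_of_nonneg_ae (.of_forall fun x ↦ by positivity)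
    (hu.abs.pow_const p).aestronglyMeasurable, ENNReal.toReal_rpow]
  simp_rw [← Real.norm_eq_abs, ← ENNReal.ofReal_rpow_of_nonneg (norm_nonneg _) hp, ofReal_norm]
  rfl

/-- `c` is an isoperimetric constant for exponent `1 / p`: `c |E|^{1/p} ≤ P_s(E)` for every `E` of
finite measure. -/
def IsIsoperimetricConst (N : ℕ) (s p c : ℝ) : Prop :=
  ∀ E : Set (Rn N), NullMeasurableSet E → volume E ≠ ∞ →
    ENNReal.ofReal c * volume E ^ (1 / p) ≤ fracPerimeter N s E

lemma IsIsoperimetricConst.mul_lorentzOneNorm_le (hc : IsIsoperimetricConst N s p c)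
    (hu : Integrable u) :
    ENNReal.ofReal c * lorentzOneNorm volume p (fun x ↦ ‖u x‖₊) ≤ gagE N s u := by
  have habs : AEMeasurable fun x ↦ |u x| := hu.aemeasurable.abs
  calc ENNReal.ofReal c * lorentzOneNorm volume p (fun x ↦ ‖u x‖₊)
      = ∫⁻ t in Set.Ioi (0 : ℝ), ENNReal.ofReal c * volume {x | t < |u x|} ^ (1 / p) :=
        (lintegral_const_mul' _ _ ENNReal.ofReal_ne_top).symm
    _ ≤ ∫⁻ t in Set.Ioi (0 : ℝ), fracPerimeter N s {x | t < |u x|} :=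
        setLIntegral_mono' measurableSet_Ioi fun t ht ↦
          hc _ (nullMeasurableSet_lt aemeasurable_const habs) (hu.abs.measure_gt_lt_top ht).ne
    _ ≤ ∫⁻ t : ℝ, fracPerimeter N s {x | t < |u x|} := setLIntegral_le_lintegral _ _
    _ = gagE N s (fun x ↦ |u x|) := (gagE_eq_lintegral_fracPerimeter s habs).symm
    _ ≤ gagE N s u := gagE_abs_le N s u

lemma IsIsoperimetricConst.mul_lintegral_rpow_le (hc : IsIsoperimetricConst N s p c) (hp : 1 ≤ p)
    (hu : Integrable u) :
    ENNReal.ofReal c * (∫⁻ x, (‖u x‖₊ : ℝ≥0∞) ^ p) ^ (1 / p) ≤ gagE N s u := by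
  refine le_trans (mul_le_mul_right ?_ _) (hc.mul_lorentzOneNorm_le hu)
  rw [one_div, ENNReal.rpow_inv_le_iff (one_pos.trans_le hp)]
  exact lintegral_rpow_le_lorentzOneNorm_rpow hp hu.aemeasurable.nnnorm

lemma nontriv.lintegral_rpow_ne_zero (hnt : nontriv N u) (hu : AEMeasurable u) :
    ∫⁻ x, (‖u x‖₊ : ℝ≥0∞) ^ p ≠ 0 := by
  rw [Ne, lintegral_eq_zero_iff' (hu.nnnorm.coe_nnreal_ennreal.pow_const p)]
  refine fun h ↦ hnt (h.mono fun x hx ↦ ?_)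
  have hx' : (‖u x‖₊ : ℝ≥0∞) = 0 := by
    by_contra hne
    exact (ENNReal.rpow_pos (pos_iff_ne_zero.2 hne) ENNReal.coe_ne_top).ne' hx
  simpa using hx'

theorem IsIsoperimetricConst.le_gag_div_Lq (hc : IsIsoperimetricConst N s p c) (hp : 1 ≤ p)
    (hu : memW N s u) (hnt : nontriv N u) : c ≤ gag N s u / Lq N p u := by
  have hp0 : 0 < p := one_pos.trans_le hp
  rcases le_or_gt c 0 with hc0 | hc0
  · exact hc0.trans (div_nonneg ENNReal.toReal_nonneg (Lq_nonneg N p u))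
  have hle := hc.mul_lintegral_rpow_le hp hu.1
  set L := (∫⁻ x, (‖u x‖₊ : ℝ≥0∞) ^ p) ^ (1 / p) with hL
  have hL_top : L ≠ ∞ := fun h ↦ by
    rw [h, ENNReal.mul_top (ENNReal.ofReal_pos.2 hc0).ne'] at hle
    exact hle.not_gt hu.2
  have hL_ne : L ≠ 0 := by
    rw [hL, one_div, Ne, ENNReal.rpow_eq_zero_iff_of_pos (inv_pos.2 hp0)]
    exact hnt.lintegral_rpow_ne_zero hu.1.aemeasurable
  rw [Lq_eq_toReal hp0.le hu.1.aemeasurable, ← hL,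
    le_div_iff₀ (ENNReal.toReal_pos hL_ne hL_top), gag]
  simpa [ENNReal.toReal_ofReal hc0.le] using ENNReal.toReal_mono hu.2.ne hle

lemma IsIsoperimetricConst.le_Scrit
    (hc : IsIsoperimetricConst N s ((N : ℝ) / ((N : ℝ) - s)) c)
    (hp : 1 ≤ (N : ℝ) / ((N : ℝ) - s)) (hW : ∃ u, memW N s u ∧ nontriv N u) :
    c ≤ Scrit N s := by
  obtain ⟨u, hu, hnt⟩ := hW
  refine le_csInf ⟨_, u, hu, hnt, rfl⟩ ?_
  rintro _ ⟨v, hv, hv_nt, rfl⟩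
  exact hc.le_gag_div_Lq hp hv hv_nt

end Isoperimetric

section Scaling

lemma lintegral_comp_smul {F : Type*} [NormedAddCommGroup F] [NormedSpace ℝ F]
    [MeasurableSpace F] [BorelSpace F] [FiniteDimensional ℝ F] (μ : Measure F)
    [μ.IsAddHaarMeasure] (f : F → ℝ≥0∞) {r : ℝ} (hr : r ≠ 0) :
    ∫⁻ x, f (r • x) ∂μ = ENNReal.ofReal |(r ^ Module.finrank ℝ F)⁻¹| * ∫⁻ x, f x ∂μ := by
  have hemb : MeasurableEmbedding fun x : F ↦ r • x :=
    (Homeomorph.smulOfNeZero r hr).measurableEmbedding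
  rw [← hemb.lintegral_map f, Measure.map_addHaar_smul μ hr, lintegral_smul_measure, smul_eq_mul]

variable {N : ℕ} {s r : ℝ} {E : Set (Rn N)}

lemma abs_inv_pow_finrank_eq (hr : 0 < r) :
    |(r ^ Module.finrank ℝ (Rn N))⁻¹| = r ^ (-(N : ℝ)) := by
  rw [finrank_euclideanSpace_fin, abs_of_pos (by positivity), rpow_neg hr.le, rpow_natCast]

lemma gagE_comp_smul (s : ℝ) (hr : 0 < r) (u : Rn N → ℝ) :
    gagE N s (fun x ↦ u (r • x)) = ENNReal.ofReal (r ^ (s - N)) * gagE N s u := by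
  set k : Rn N → Rn N → ℝ≥0∞ := fun x y ↦
    ENNReal.ofReal (|u x - u y| / dist x y ^ ((N : ℝ) + s)) with hk
  have hkernel (x y : Rn N) :
      ENNReal.ofReal (|u (r • x) - u (r • y)| / dist x y ^ ((N : ℝ) + s)) =
        ENNReal.ofReal (r ^ ((N : ℝ) + s)) * k (r • x) (r • y) := by
    rw [hk, ← ENNReal.ofReal_mul (by positivity), dist_smul₀, norm_of_nonneg hr.le,
      mul_rpow hr.le dist_nonneg, ← mul_div_assoc, mul_div_mul_left _ _ (by positivity)]
  have hJ : |(r ^ Module.finrank ℝ (Rn N))⁻¹| = r ^ (-(N : ℝ)) := abs_inv_pow_finrank_eq hr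
  calc gagE N s (fun x ↦ u (r • x))
      = ∫⁻ x, ∫⁻ y, ENNReal.ofReal (r ^ ((N : ℝ) + s)) * k (r • x) (r • y) :=
        lintegral_congr fun x ↦ lintegral_congr fun y ↦ hkernel x y
    _ = ENNReal.ofReal (r ^ ((N : ℝ) + s)) * (ENNReal.ofReal (r ^ (-(N : ℝ))) *
          (ENNReal.ofReal (r ^ (-(N : ℝ))) * gagE N s u)) := by
        simp_rw [lintegral_const_mul' _ _ ENNReal.ofReal_ne_top,
          lintegral_comp_smul volume (k _) hr.ne', lintegral_const_mul' _ _ ENNReal.ofReal_ne_top,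
          lintegral_comp_smul volume (fun x ↦ ∫⁻ y, k x y) hr.ne', hJ, gagE, hk]
    _ = ENNReal.ofReal (r ^ (s - N)) * gagE N s u := by
        simp_rw [← mul_assoc, ← ENNReal.ofReal_mul (rpow_nonneg hr.le _)]
        rw [← ENNReal.ofReal_mul (by positivity), ← rpow_add hr, ← rpow_add hr]
        congr 3
        ring

lemma fracPerimeter_preimage_smul (s : ℝ) (hr : 0 < r) (E : Set (Rn N)) :
    fracPerimeter N s ((r • ·) ⁻¹' E) = ENNReal.ofReal (r ^ (s - N)) * fracPerimeter N s E :=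
  gagE_comp_smul s hr (E.indicator fun _ ↦ 1)

lemma volume_preimage_smul (hr : 0 < r) (E : Set (Rn N)) :
    volume ((r • ·) ⁻¹' E) = ENNReal.ofReal (r ^ (-(N : ℝ))) * volume E := by
  rw [Measure.addHaar_preimage_smul volume hr.ne', abs_inv_pow_finrank_eq hr]

/-- The isoperimetric ratio is dilation invariant, so the volume can be prescribed. -/
lemma exists_volume_eq_of_fracPerimeter_le (hN : N ≠ 0) (hsN : s ≤ N) {C : ℝ≥0∞} {m : ℝ}
    (hm : 0 < m) (hE : NullMeasurableSet E) (hE0 : volume E ≠ 0) (hE_top : volume E ≠ ∞)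
    (hPE : fracPerimeter N s E ≤ C * volume E ^ (((N : ℝ) - s) / N)) :
    ∃ F : Set (Rn N), NullMeasurableSet F ∧ volume F = ENNReal.ofReal m ∧
      fracPerimeter N s F ≤ C * volume F ^ (((N : ℝ) - s) / N) := by
  have hN' : (N : ℝ) ≠ 0 := Nat.cast_ne_zero.2 hN
  set V := volume.real E
  have hV : 0 < V := ENNReal.toReal_pos hE0 hE_top
  set r := (m / V) ^ (-(N : ℝ)⁻¹)
  have hr : 0 < r := by positivity
  have hr_pow : r ^ (-(N : ℝ)) = m / V := by
    rw [← rpow_mul (by positivity), neg_mul_neg, inv_mul_cancel₀ hN', rpow_one]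
  refine ⟨(r • ·) ⁻¹' E, hE.preimage (Measure.quasiMeasurePreserving_smul volume hr.ne'), ?_, ?_⟩
  · rw [volume_preimage_smul hr, hr_pow, ← ofReal_measureReal hE_top,
      ← ENNReal.ofReal_mul (by positivity), div_mul_cancel₀ _ hV.ne']
  · calc fracPerimeter N s ((r • ·) ⁻¹' E)
        ≤ ENNReal.ofReal (r ^ (s - N)) * (C * volume E ^ (((N : ℝ) - s) / N)) := by
          rw [fracPerimeter_preimage_smul s hr]
          gcongr
      _ = C * volume ((r • ·) ⁻¹' E) ^ (((N : ℝ) - s) / N) := by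
          rw [volume_preimage_smul hr,
            ENNReal.mul_rpow_of_nonneg _ _ (div_nonneg (sub_nonneg.2 hsN) N.cast_nonneg),
            ENNReal.ofReal_rpow_of_pos (by positivity), ← rpow_mul hr.le,
            show -(N : ℝ) * (((N : ℝ) - s) / N) = s - N by field_simp; ring, mul_left_comm]

end Scaling

section UpperBound

variable {N : ℕ} {s q l : ℝ} {E : Set (Rn N)}

lemma Lq_indicator_one (hq : q ≠ 0) (hE : NullMeasurableSet E) :
    Lq N q (E.indicator fun _ ↦ 1) = volume.real E ^ (1 / q) := by
  have hpow : (fun x ↦ |E.indicator (fun _ ↦ (1 : ℝ)) x| ^ q) = E.indicator fun _ ↦ 1 := by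
    ext x
    by_cases hx : x ∈ E <;> simp [hx, hq]
  rw [Lq, hpow, integral_indicator₀ hE, setIntegral_const, smul_eq_mul, mul_one]

lemma integral_abs_indicator_one (hE : NullMeasurableSet E) :
    ∫ x, |E.indicator (fun _ ↦ (1 : ℝ)) x| = volume.real E := by
  simpa [Lq] using Lq_indicator_one one_ne_zero hE

lemma memW_indicator_one (hE : NullMeasurableSet E) (hE_top : volume E ≠ ∞)
    (hPE : fracPerimeter N s E ≠ ∞) : memW N s (E.indicator fun _ ↦ 1) :=
  ⟨(integrableOn_const hE_top).integrable_indicator₀ hE, hPE.lt_top⟩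

lemma nontriv_indicator_one (hE0 : volume E ≠ 0) : nontriv N (E.indicator fun _ ↦ 1) := by
  rw [nontriv, Set.indicator_ae_eq_zero]
  simpa [Function.support_const] using hE0

lemma Scrit_nonneg (N : ℕ) (s : ℝ) : 0 ≤ Scrit N s := by
  refine Real.sInf_nonneg ?_
  rintro _ ⟨u, -, -, rfl⟩
  exact div_nonneg ENNReal.toReal_nonneg (Lq_nonneg N _ u)

lemma SFull_le_of_memW {u : Rn N → ℝ} (q : ℝ) (hu : memW N s u) (hnt : nontriv N u) :
    SFull N s q ≤ (gag N s u + ∫ x, |u x|) / Lq N q u := by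
  refine csInf_le ⟨0, ?_⟩ ⟨u, hu, hnt, rfl⟩
  rintro _ ⟨v, -, -, rfl⟩
  exact div_nonneg (add_nonneg ENNReal.toReal_nonneg (by positivity)) (Lq_nonneg N q v)

lemma SFull_eq_zero_of_forall_not (q : ℝ) (hW : ¬ ∃ u, memW N s u ∧ nontriv N u) :
    SFull N s q = 0 := by
  rw [SFull, ← Real.sInf_empty]
  congr 1
  exact Set.eq_empty_of_forall_notMem fun r ⟨u, hu, hnt, _⟩ ↦ hW ⟨u, hu, hnt⟩

lemma SFull_le_of_set (hq : q ≠ 0) (hE : NullMeasurableSet E) (hE0 : volume E ≠ 0)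
    (hE_top : volume E ≠ ∞) (hPE : fracPerimeter N s E ≠ ∞) :
    SFull N s q ≤ ((fracPerimeter N s E).toReal + volume.real E) / volume.real E ^ (1 / q) := by
  have hle := SFull_le_of_memW q (memW_indicator_one hE hE_top hPE) (nontriv_indicator_one hE0)
  rwa [integral_abs_indicator_one hE, Lq_indicator_one hq hE] at hle

lemma exists_fracPerimeter_le_of_Scrit_lt (hN : N ≠ 0) (hs0 : 0 ≤ s) (hsN : s < N)
    (hW : ∃ u, memW N s u ∧ nontriv N u) (hl : Scrit N s < l) :
    ∃ E : Set (Rn N), NullMeasurableSet E ∧ volume E ≠ 0 ∧ volume E ≠ ∞ ∧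
      fracPerimeter N s E ≤ ENNReal.ofReal l * volume E ^ (((N : ℝ) - s) / N) := by
  have hNs : 0 < (N : ℝ) - s := sub_pos.2 hsN
  by_contra! hlt
  refine hl.not_ge (IsIsoperimetricConst.le_Scrit (fun E hE hE_top ↦ ?_) ?_ hW)
  · rw [one_div_div]
    rcases eq_or_ne (volume E) 0 with hE0 | hE0
    · simp [hE0, ENNReal.zero_rpow_of_pos (div_pos hNs (by positivity : 0 < (N : ℝ)))]
    · exact (hlt E hE hE0 hE_top).le
  · rw [one_le_div hNs]
    linarith

lemma SFull_le_mul_rpow_add_rpow (hN : N ≠ 0) (hs0 : 0 ≤ s) (hsN : s < N) (hq : q ≠ 0)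
    (hl : Scrit N s < l) {m : ℝ} (hm : 0 < m) :
    SFull N s q ≤ l * m ^ (-(1 / q - ((N : ℝ) - s) / N)) + m ^ (1 - 1 / q) := by
  have hl0 : 0 ≤ l := (Scrit_nonneg N s).trans hl.le
  by_cases hW : ∃ u, memW N s u ∧ nontriv N u
  swap
  · rw [SFull_eq_zero_of_forall_not q hW]
    positivity
  obtain ⟨E, hE, hE0, hE_top, hPE⟩ := exists_fracPerimeter_le_of_Scrit_lt hN hs0 hsN hW hl
  obtain ⟨F, hF, hF_vol, hPF⟩ := exists_volume_eq_of_fracPerimeter_le hN hsN.le hm hE hE0 hE_top hPE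
  rw [hF_vol, ENNReal.ofReal_rpow_of_pos hm, ← ENNReal.ofReal_mul hl0] at hPF
  have hF_real : volume.real F = m := by rw [Measure.real, hF_vol, ENNReal.toReal_ofReal hm.le]
  calc SFull N s q
      ≤ ((fracPerimeter N s F).toReal + m) / m ^ (1 / q) := by
        simpa only [hF_real] using SFull_le_of_set hq hF (by simp [hF_vol, hm]) (by simp [hF_vol])
          (ne_top_of_le_ne_top ENNReal.ofReal_ne_top hPF)
    _ ≤ (l * m ^ (((N : ℝ) - s) / N) + m) / m ^ (1 / q) := by
        gcongr
        exact ENNReal.toReal_le_of_le_ofReal (by positivity) hPF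
    _ = l * m ^ (-(1 / q - ((N : ℝ) - s) / N)) + m ^ (1 - 1 / q) := by
        rw [neg_sub, rpow_sub hm, rpow_sub hm, rpow_one]
        ring

lemma exists_mul_rpow_neg_add_rpow_eq {α β : ℝ} (hα : 0 < α) (hβ : 0 < β) (hl : 0 < l) :
    ∃ m > 0, l * m ^ (-α) + m ^ β =
      (α + β) * α ^ (-α / (α + β)) * β ^ (-β / (α + β)) * l ^ (β / (α + β)) := by
  have hαβ : α + β ≠ 0 := by positivity
  set m := (l * α / β) ^ (α + β)⁻¹
  have hm : 0 < m := by positivity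
  have hm_add : m ^ (α + β) = l * α / β := rpow_inv_rpow (by positivity) hαβ
  have hm_neg : l * m ^ (-α) = m ^ β * (β / α) := by
    rw [show -α = β - (α + β) by ring, rpow_sub hm, hm_add]
    field_simp
  have hm_pow : m ^ β = l ^ (β / (α + β)) * α ^ (β / (α + β)) * β ^ (-β / (α + β)) := by
    rw [← rpow_mul (by positivity), inv_mul_eq_div, div_rpow (by positivity) hβ.le,
      mul_rpow hl.le hα.le, neg_div, rpow_neg hβ.le, div_eq_mul_inv]
  have hα_pow : α ^ (β / (α + β)) = α * α ^ (-α / (α + β)) := by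
    rw [show β / (α + β) = 1 + -α / (α + β) by field_simp; ring, rpow_add hα, rpow_one]
  refine ⟨m, hm, ?_⟩
  rw [hm_neg, hm_pow, hα_pow]
  field_simp
  ring

end UpperBound

/-- the upper bound for `S_{s,q}(ℝ^N)`, `1 < q < 1*_s = N/(N-s)`. -/
theorem S_full_upper_bound (N : ℕ) (hN : 1 ≤ N) (s : ℝ) (hs0 : 0 < s) (hs1 : s < 1)
    (q : ℝ) (hq1 : 1 < q) (hq : q < (N : ℝ) / ((N : ℝ) - s)) :
    SFull N s q ≤
      (s / N) * (1 / q - ((N : ℝ) - s) / N) ^ ((N / s) * (((N : ℝ) - s) / N - 1 / q)) *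
        (1 - 1 / q) ^ ((N / s) * (1 / q - 1)) *
        Scrit N s ^ ((N / s) * (1 - 1 / q)) := by
  have : (0 : ℝ) < N := Nat.cast_pos.2 hN
  have hsN : s < N := hs1.trans_le (Nat.one_le_cast.2 hN)
  have hq0 : 0 < q := one_pos.trans hq1
  have hα : 0 < 1 / q - ((N : ℝ) - s) / N := by
    rw [sub_pos, ← one_div_div]
    exact one_div_lt_one_div_of_lt hq0 hq
  have hβ : 0 < 1 - 1 / q := sub_pos.2 ((div_lt_one hq0).2 hq1)
  have hsum : 1 / q - ((N : ℝ) - s) / N + (1 - 1 / q) = s / N := by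
    field_simp
    ring
  have hdiv (x : ℝ) : x / (s / N) = N / s * x := by rw [div_div_eq_mul_div]; ring
  have hcont : ContinuousAt (fun l : ℝ ↦ l ^ ((N / s) * (1 - 1 / q))) (Scrit N s) :=
    continuousAt_rpow_const _ _ (.inr (by positivity))
  refine ge_of_tendsto ((hcont.tendsto.const_mul _).mono_left <|
    nhdsWithin_le_nhds (s := Set.Ioi (Scrit N s)))
    (eventually_mem_nhdsWithin.mono fun l (hl : Scrit N s < l) ↦ ?_)
  obtain ⟨m, hm, hm_eq⟩ :=
    exists_mul_rpow_neg_add_rpow_eq hα hβ ((Scrit_nonneg N s).trans_lt hl)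
  simp_rw [hsum, hdiv, neg_sub] at hm_eq
  rw [← hm_eq, ← neg_sub]
  exact SFull_le_mul_rpow_add_rpow (Nat.one_le_iff_ne_zero.1 hN) hs0.le hsN hq0.ne' hl hm
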